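/- For a fixed Lipschitz spinor κ = (ξ,η), every element (a,b) ∈ Cl(0,n)^2 decomposes uniquely as κ x + κ̌ y with x = (conj(ξ)a + conj(η)b)/|κ|^2 and y = (η^* a − ξ^* b)/|κ|^2, where |κ|^2 = |ξ|^2 + |η|^2; thus Cl(0,n)^2 = κ·Cl(0,n) ⊕ κ̌·Cl(0,n). -/

import Mathlib

open CliffordAlgebra

noncomputable section

namespace PaperCliff

noncomputable instance : Invertible (2 : ℝ) := invertibleOfNonzero two_ne_zero

/-- The quadratic form on `ℝ^{p,q}`: `p` generators of square `+1`, `q` of square `-1`. -/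
def sigQ (p q : ℕ) : QuadraticForm ℝ (Fin (p + q) → ℝ) :=
  QuadraticMap.weightedSumSquares ℝ
    (fun i : Fin (p + q) => if (i : ℕ) < p then (1 : ℝ) else -1)

/-- The negative-definite quadratic form for `Cl(0,n)`. -/
def negQ (n : ℕ) : QuadraticForm ℝ (Fin n → ℝ) :=
  QuadraticMap.weightedSumSquares ℝ (fun _ : Fin n => (-1 : ℝ))

variable {M : Type*} [AddCommGroup M] [Module ℝ M]

/-- Clifford conjugation: composite of the grade involution and reversal. -/
def cconj {Q : QuadraticForm ℝ M} (x : CliffordAlgebra Q) : CliffordAlgebra Q :=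
  reverse (involute x)

/-- The paravectors `ℝ ⊕ ℝ^{p,q}` inside the Clifford algebra. -/
def paravec (Q : QuadraticForm ℝ M) : Submodule ℝ (CliffordAlgebra Q) :=
  LinearMap.range (Algebra.linearMap ℝ (CliffordAlgebra Q)) ⊔ LinearMap.range (ι Q)

/-- The real (degree-zero) component of an element of the Clifford algebra,
via the canonical linear isomorphism with the exterior algebra. -/
def clRe {Q : QuadraticForm ℝ M} (x : CliffordAlgebra Q) : ℝ :=
  ExteriorAlgebra.algebraMapInv (CliffordAlgebra.equivExterior Q x)

/-- The reduced basis monomial `i_{j₁} ⋯ i_{j_k}` for a finite set of indices (in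
increasing order). -/
def mono {m : ℕ} (Q : QuadraticForm ℝ (Fin m → ℝ)) (s : Finset (Fin m)) :
    CliffordAlgebra Q :=
  ((s.sort (· ≤ ·)).map fun j => ι Q (Pi.single j 1)).prod

/-- The (paravector) Lipschitz group, as a subgroup of the units: the group generated by
invertible paravectors. -/
def lipUnits (Q : QuadraticForm ℝ M) : Subgroup (CliffordAlgebra Q)ˣ :=
  Subgroup.closure {u : (CliffordAlgebra Q)ˣ | (u : CliffordAlgebra Q) ∈ paravec Q}

/-- The underlying set of the paravector Lipschitz group `$Γ`. -/
def lipGrp (Q : QuadraticForm ℝ M) : Set (CliffordAlgebra Q) :=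
  {x | ∃ u ∈ lipUnits Q, (u : CliffordAlgebra Q) = x}

/-- The Lipschitz monoid `$Γ^▷ = $Γ ∪ {0}`. -/
def lipMon (Q : QuadraticForm ℝ M) : Set (CliffordAlgebra Q) :=
  insert 0 (lipGrp Q)

/-- A Lipschitz spinor: a pair of elements of the Lipschitz monoid, not both zero,
with `ξ ⬝ conj η` a paravector. -/
def IsSpinor (Q : QuadraticForm ℝ M) (ξ η : CliffordAlgebra Q) : Prop :=
  ξ ∈ lipMon Q ∧ η ∈ lipMon Q ∧ ¬(ξ = 0 ∧ η = 0) ∧ ξ * cconj η ∈ paravec Q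

/-- Membership in `SL(2, $Γ)`: entries in the Lipschitz monoid, pseudo-determinant
`a^* d - c^* b = 1`, and `a b^*, c d^*, c^* a, d^* b` paravectors. -/
def IsSL2 (Q : QuadraticForm ℝ M) (a b c d : CliffordAlgebra Q) : Prop :=
  a ∈ lipMon Q ∧ b ∈ lipMon Q ∧ c ∈ lipMon Q ∧ d ∈ lipMon Q ∧
    reverse a * d - reverse c * b = 1 ∧
    a * reverse b ∈ paravec Q ∧ c * reverse d ∈ paravec Q ∧
    reverse c * a ∈ paravec Q ∧ reverse d * b ∈ paravec Q

/-!
Put `κ = (ξ, η)` and `κ̌ = (η', -ξ')` as the columns of a `2 × 2` matrix `K`. Let `L` be the matrix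
with rows `(conj ξ, conj η)` and `(η^*, -ξ^*)`. The norms of `ξ` and `η` are scalars, so the
diagonal entries of `K L` and `L K` are `|κ|²`; the off-diagonal entries vanish because `ξ conj η`
is invariant under reversal. Hence `K L = L K = |κ|²`, and `(a, b) = K (x, y)` is solved by
`(x, y) = |κ|⁻² L (a, b)`.
-/

section LinearSystem

variable {m n k A : Type*} [Fintype m] [DecidableEq m] [Fintype n] [DecidableEq n]
  [Semifield k] [Semiring A] [Algebra k A]

open scoped Matrix

theorem eq_mulVec_iff_eq_inv_smul_mulVec {B : Matrix m n A} {C : Matrix n m A} {r : k}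
    (hr : r ≠ 0) (hBC : B * C = r • 1) (hCB : C * B = r • 1) (v : m → A) (w : n → A) :
    v = B *ᵥ w ↔ w = r⁻¹ • C *ᵥ v := by
  constructor
  · rintro rfl
    rw [Matrix.mulVec_mulVec, hCB, Matrix.smul_mulVec, Matrix.one_mulVec, inv_smul_smul₀ hr]
  · rintro rfl
    rw [Matrix.mulVec_smul, Matrix.mulVec_mulVec, hBC, Matrix.smul_mulVec, Matrix.one_mulVec,
      inv_smul_smul₀ hr]

end LinearSystem

section Norm

variable {Q : QuadraticForm ℝ M}

theorem cconj_eq_star (x : CliffordAlgebra Q) : cconj x = star x := rfl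

theorem involute_cconj (x : CliffordAlgebra Q) : involute (cconj x) = reverse x := by
  rw [cconj, reverse_involute, involute_involute]

theorem cconj_involute (x : CliffordAlgebra Q) : cconj (involute x) = reverse x := by
  rw [cconj, involute_involute]

theorem cconj_reverse (x : CliffordAlgebra Q) : cconj (reverse x) = involute x := by
  rw [cconj, ← reverse_involute, reverse_reverse]

theorem clRe_algebraMap (r : ℝ) : clRe (algebraMap ℝ (CliffordAlgebra Q) r) = r := by
  simp [clRe, equivExterior, changeForm_algebraMap]

theorem clRe_smul (r : ℝ) (x : CliffordAlgebra Q) : clRe (r • x) = r * clRe x := by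
  simp [clRe]

/-- The squared norm `|x|² = Re (x conj x)`. -/
def clNormSq (x : CliffordAlgebra Q) : ℝ :=
  clRe (x * cconj x)

theorem mul_cconj_eq_algebraMap_clNormSq {x : CliffordAlgebra Q} {r : ℝ}
    (h : x * cconj x = algebraMap ℝ _ r) : x * cconj x = algebraMap ℝ _ (clNormSq x) := by
  rw [clNormSq, h, clRe_algebraMap]

theorem clNormSq_zero : clNormSq (0 : CliffordAlgebra Q) = 0 := by
  rw [clNormSq, zero_mul, ← map_zero (algebraMap ℝ _), clRe_algebraMap]

theorem clNormSq_one : clNormSq (1 : CliffordAlgebra Q) = 1 := by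
  rw [clNormSq, cconj_eq_star, star_one, mul_one, ← map_one (algebraMap ℝ _), clRe_algebraMap]

theorem mul_mul_cconj (x : CliffordAlgebra Q) {y : CliffordAlgebra Q} {r : ℝ}
    (hy : y * cconj y = algebraMap ℝ _ r) : x * y * cconj (x * y) = r • (x * cconj x) := by
  calc x * y * cconj (x * y) = x * (y * cconj y) * cconj x := by
        simp only [cconj_eq_star, star_mul, mul_assoc]
    _ = r • (x * cconj x) := by
        rw [hy, Algebra.algebraMap_eq_smul_one, mul_smul_comm, mul_one, smul_mul_assoc]

theorem clNormSq_mul (x : CliffordAlgebra Q) {y : CliffordAlgebra Q}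
    (hy : y * cconj y = algebraMap ℝ _ (clNormSq y)) :
    clNormSq (x * y) = clNormSq x * clNormSq y := by
  rw [clNormSq, mul_mul_cconj x hy, clRe_smul, mul_comm, ← clNormSq]

theorem exists_eq_of_mem_paravec {x : CliffordAlgebra Q} (hx : x ∈ paravec Q) :
    ∃ (r : ℝ) (v : M), x = algebraMap ℝ _ r + ι Q v := by
  obtain ⟨_, ⟨r, rfl⟩, _, ⟨v, rfl⟩, rfl⟩ := Submodule.mem_sup.mp hx
  exact ⟨r, v, rfl⟩

theorem reverse_eq_self_of_mem_paravec {x : CliffordAlgebra Q} (hx : x ∈ paravec Q) :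
    reverse x = x := by
  obtain ⟨r, v, rfl⟩ := exists_eq_of_mem_paravec hx
  rw [map_add, reverse.commutes, reverse_ι]

theorem paravector_mul_cconj (r : ℝ) (v : M) :
    (algebraMap ℝ _ r + ι Q v) * cconj (algebraMap ℝ _ r + ι Q v) =
      algebraMap ℝ _ (r ^ 2 - Q v) := by
  rw [cconj_eq_star, star_add, star_algebraMap, star_ι, ← sub_eq_add_neg,
    ← (Algebra.commute_algebraMap_left r (ι Q v)).sq_sub_sq, pow_two (ι Q v),
    ι_sq_scalar, map_sub, map_pow]

end Norm

section LipschitzMonoid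

variable {Q : QuadraticForm ℝ M} {x : CliffordAlgebra Q} {u : (CliffordAlgebra Q)ˣ}

theorem cconj_mul_eq_of_mul_cconj_eq {r : ℝ}
    (h : (u : CliffordAlgebra Q) * cconj u = algebraMap ℝ _ r) :
    cconj (u : CliffordAlgebra Q) * u = algebraMap ℝ _ r := by
  rw [← u.mul_right_inj, ← mul_assoc, h, Algebra.commutes]

theorem clNormSq_inv_mul_clNormSq
    (h : (u : CliffordAlgebra Q) * cconj u = algebraMap ℝ _ (clNormSq u.val)) :
    clNormSq (u⁻¹).val * clNormSq u.val = 1 := by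
  rw [← clNormSq_mul _ h, Units.inv_mul, clNormSq_one]

theorem inv_mul_cconj_inv
    (h : (u : CliffordAlgebra Q) * cconj u = algebraMap ℝ _ (clNormSq u.val)) :
    (u⁻¹).val * cconj (u⁻¹).val = algebraMap ℝ _ (clNormSq (u⁻¹).val) := by
  have smul_eq_one : clNormSq u.val • ((u⁻¹).val * cconj (u⁻¹).val) = 1 := by
    rw [← mul_mul_cconj _ h, Units.inv_mul, cconj_eq_star, star_one, mul_one]
  rw [Algebra.algebraMap_eq_smul_one, ← smul_eq_one, smul_smul,
    clNormSq_inv_mul_clNormSq h, one_smul]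

theorem mul_cconj_of_mem_lipUnits (hu : u ∈ lipUnits Q) :
    (u : CliffordAlgebra Q) * cconj u = algebraMap ℝ _ (clNormSq u.val) := by
  induction hu using Subgroup.closure_induction with
  | mem u hu =>
    obtain ⟨r, v, hrv⟩ := exists_eq_of_mem_paravec hu
    rw [hrv]
    exact mul_cconj_eq_algebraMap_clNormSq (paravector_mul_cconj r v)
  | one => rw [Units.val_one, clNormSq_one, cconj_eq_star, star_one, mul_one, map_one]
  | mul u w _ _ hu hw =>
    refine mul_cconj_eq_algebraMap_clNormSq (r := clNormSq w.val * clNormSq u.val) ?_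
    rw [Units.val_mul, mul_mul_cconj _ hw, hu, map_mul, Algebra.smul_def]
  | inv u _ hu => exact inv_mul_cconj_inv hu

theorem clNormSq_pos_of_mem_lipUnits (hQ : ∀ v, Q v ≤ 0) (hu : u ∈ lipUnits Q) :
    0 < clNormSq u.val := by
  induction hu using Subgroup.closure_induction with
  | mem u hu =>
    have norm_ne_zero : clNormSq u.val ≠ 0 :=
      right_ne_zero_of_mul_eq_one
        (clNormSq_inv_mul_clNormSq (mul_cconj_of_mem_lipUnits (Subgroup.subset_closure hu)))
    have norm_nonneg : 0 ≤ clNormSq u.val := by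
      obtain ⟨r, v, hrv⟩ := exists_eq_of_mem_paravec hu
      rw [clNormSq, hrv, paravector_mul_cconj, clRe_algebraMap]
      linarith [sq_nonneg r, hQ v]
    exact norm_nonneg.lt_of_ne' norm_ne_zero
  | one => rw [Units.val_one, clNormSq_one]; exact one_pos
  | mul u w _ hw_mem hu hw =>
    rw [Units.val_mul, clNormSq_mul _ (mul_cconj_of_mem_lipUnits hw_mem)]
    exact mul_pos hu hw
  | inv u hu_mem hu =>
    rw [eq_inv_of_mul_eq_one_left (clNormSq_inv_mul_clNormSq (mul_cconj_of_mem_lipUnits hu_mem))]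
    exact inv_pos.mpr hu

theorem clNormSq_nonneg (hQ : ∀ v, Q v ≤ 0) (hx : x ∈ lipMon Q) : 0 ≤ clNormSq x := by
  obtain rfl | ⟨u, hu, rfl⟩ := hx
  · exact clNormSq_zero.ge
  · exact (clNormSq_pos_of_mem_lipUnits hQ hu).le

theorem clNormSq_pos (hQ : ∀ v, Q v ≤ 0) (hx : x ∈ lipMon Q) (hx0 : x ≠ 0) :
    0 < clNormSq x := by
  obtain rfl | ⟨u, hu, rfl⟩ := hx
  · exact absurd rfl hx0
  · exact clNormSq_pos_of_mem_lipUnits hQ hu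

theorem mul_cconj_of_mem_lipMon (hx : x ∈ lipMon Q) :
    x * cconj x = algebraMap ℝ _ (clNormSq x) := by
  obtain rfl | ⟨u, hu, rfl⟩ := hx
  · rw [zero_mul, clNormSq_zero, map_zero]
  · exact mul_cconj_of_mem_lipUnits hu

theorem cconj_mul_of_mem_lipMon (hx : x ∈ lipMon Q) :
    cconj x * x = algebraMap ℝ _ (clNormSq x) := by
  obtain rfl | ⟨u, hu, rfl⟩ := hx
  · rw [mul_zero, clNormSq_zero, map_zero]
  · exact cconj_mul_eq_of_mul_cconj_eq (mul_cconj_of_mem_lipUnits hu)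

theorem involute_mul_reverse_of_mem_lipMon (hx : x ∈ lipMon Q) :
    involute x * reverse x = algebraMap ℝ _ (clNormSq x) := by
  rw [← involute_cconj, ← map_mul, mul_cconj_of_mem_lipMon hx, involute.commutes]

theorem reverse_mul_involute_of_mem_lipMon (hx : x ∈ lipMon Q) :
    reverse x * involute x = algebraMap ℝ _ (clNormSq x) := by
  rw [← involute_cconj, ← map_mul, cconj_mul_of_mem_lipMon hx, involute.commutes]

end LipschitzMonoid

section Spinor

variable {Q : QuadraticForm ℝ M} {ξ η : CliffordAlgebra Q}

theorem IsSpinor.clNormSq_add_pos (hQ : ∀ v, Q v ≤ 0) (h : IsSpinor Q ξ η) :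
    0 < clNormSq ξ + clNormSq η := by
  obtain ⟨hξ, hη, hne, -⟩ := h
  obtain hξ0 | hη0 := not_and_or.mp hne
  · exact add_pos_of_pos_of_nonneg (clNormSq_pos hQ hξ hξ0) (clNormSq_nonneg hQ hη)
  · exact add_pos_of_nonneg_of_pos (clNormSq_nonneg hQ hξ) (clNormSq_pos hQ hη hη0)

theorem mul_cconj_eq_involute_mul_reverse (h : reverse (ξ * cconj η) = ξ * cconj η) :
    ξ * cconj η = involute η * reverse ξ := by
  rw [← h, reverse.map_mul, cconj, reverse_reverse]

theorem mul_cconj_swap_eq_involute_mul_reverse (h : reverse (ξ * cconj η) = ξ * cconj η) :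
    η * cconj ξ = involute ξ * reverse η := by
  calc η * cconj ξ = cconj (ξ * cconj η) := by simp only [cconj_eq_star, star_mul, star_star]
    _ = cconj (involute η * reverse ξ) := by rw [mul_cconj_eq_involute_mul_reverse h]
    _ = cconj (reverse ξ) * cconj (involute η) := by simp only [cconj_eq_star, star_mul]
    _ = involute ξ * reverse η := by rw [cconj_reverse, cconj_involute]

theorem cconj_mul_involute_swap (hξ : ξ ∈ lipMon Q)
    (h : reverse (ξ * cconj η) = ξ * cconj η) :
    cconj ξ * involute η = cconj η * involute ξ := by
  have rev_norm := involute_mul_reverse_of_mem_lipMon hξ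
  have norm := mul_cconj_of_mem_lipMon hξ
  obtain rfl | ⟨u, -, rfl⟩ := hξ
  · rw [cconj_eq_star, star_zero, zero_mul, map_zero, mul_zero]
  have isUnit_reverse : IsUnit (reverse (u : CliffordAlgebra Q)) := by
    rw [← cconj_involute, cconj_eq_star]
    exact (u.isUnit.map involute).star
  apply u.isUnit.mul_left_cancel
  apply isUnit_reverse.mul_right_cancel
  calc u * (cconj u.val * involute η) * reverse u.val
      = u * cconj u.val * (involute η * reverse u.val) := by simp only [mul_assoc]
    _ = u * cconj η * (involute u.val * reverse u.val) := by
        rw [norm, rev_norm, ← mul_cconj_eq_involute_mul_reverse h, Algebra.commutes]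
    _ = u * (cconj η * involute u.val) * reverse u.val := by simp only [mul_assoc]

theorem reverse_mul_swap (hξ : ξ ∈ lipMon Q) (h : reverse (ξ * cconj η) = ξ * cconj η) :
    reverse ξ * η = reverse η * ξ := by
  simpa only [map_mul, involute_cconj, involute_involute] using
    congrArg involute (cconj_mul_involute_swap hξ h)

/-- The matrix with columns `κ = (ξ, η)` and `κ̌ = (η', -ξ')`, which sends `(x, y)` to
`κ x + κ̌ y`. -/
def spinorMatrix (ξ η : CliffordAlgebra Q) : Matrix (Fin 2) (Fin 2) (CliffordAlgebra Q) :=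
  !![ξ, involute η; η, -involute ξ]

/-- The adjugate of `spinorMatrix ξ η`, with rows `(conj ξ, conj η)` and `(η^*, -ξ^*)`; it is the
inverse up to the factor `|ξ|² + |η|²`. -/
def spinorAdjugate (ξ η : CliffordAlgebra Q) : Matrix (Fin 2) (Fin 2) (CliffordAlgebra Q) :=
  !![cconj ξ, cconj η; reverse η, -reverse ξ]

theorem spinorMatrix_mul_spinorAdjugate (hξ : ξ ∈ lipMon Q) (hη : η ∈ lipMon Q)
    (h : reverse (ξ * cconj η) = ξ * cconj η) :
    spinorMatrix ξ η * spinorAdjugate ξ η = (clNormSq ξ + clNormSq η) • 1 := by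
  rw [spinorMatrix, spinorAdjugate, Matrix.mul_fin_two, Matrix.one_fin_two]
  simp only [neg_mul, mul_neg, neg_neg, mul_cconj_of_mem_lipMon hξ, mul_cconj_of_mem_lipMon hη,
    involute_mul_reverse_of_mem_lipMon hξ, involute_mul_reverse_of_mem_lipMon hη,
    mul_cconj_eq_involute_mul_reverse h, mul_cconj_swap_eq_involute_mul_reverse h]
  simp [Algebra.algebraMap_eq_smul_one, add_smul, add_comm]

theorem spinorAdjugate_mul_spinorMatrix (hξ : ξ ∈ lipMon Q) (hη : η ∈ lipMon Q)
    (h : reverse (ξ * cconj η) = ξ * cconj η) :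
    spinorAdjugate ξ η * spinorMatrix ξ η = (clNormSq ξ + clNormSq η) • 1 := by
  rw [spinorMatrix, spinorAdjugate, Matrix.mul_fin_two, Matrix.one_fin_two]
  simp only [neg_mul, mul_neg, neg_neg, cconj_mul_of_mem_lipMon hξ, cconj_mul_of_mem_lipMon hη,
    reverse_mul_involute_of_mem_lipMon hξ, reverse_mul_involute_of_mem_lipMon hη,
    cconj_mul_involute_swap hξ h, reverse_mul_swap hξ h]
  simp [Algebra.algebraMap_eq_smul_one, add_smul, add_comm]

theorem spinor_direct_sum_decomposition_general (hξ : ξ ∈ lipMon Q) (hη : η ∈ lipMon Q)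
    (h : reverse (ξ * cconj η) = ξ * cconj η) (hκ : clNormSq ξ + clNormSq η ≠ 0)
    (a b x y : CliffordAlgebra Q) :
    (a = ξ * x + involute η * y ∧ b = η * x - involute ξ * y) ↔
      x = (clNormSq ξ + clNormSq η)⁻¹ • (cconj ξ * a + cconj η * b) ∧
        y = (clNormSq ξ + clNormSq η)⁻¹ • (reverse η * a - reverse ξ * b) := by
  simpa [spinorMatrix, spinorAdjugate, ← sub_eq_add_neg] using
    eq_mulVec_iff_eq_inv_smul_mulVec hκ (spinorMatrix_mul_spinorAdjugate hξ hη h)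
      (spinorAdjugate_mul_spinorMatrix hξ hη h) ![a, b] ![x, y]

end Spinor

theorem negQ_nonpos (n : ℕ) (v : Fin n → ℝ) : negQ n v ≤ 0 := by
  rw [negQ, QuadraticMap.weightedSumSquares_apply]
  exact Finset.sum_nonpos fun i _ =>
    mul_nonpos_of_nonpos_of_nonneg (by norm_num) (mul_self_nonneg (v i))

/-- For a fixed Lipschitz spinor `κ = (ξ,η)`, every `(a,b) ∈ Cl(0,n)²`
decomposes uniquely as `κ x + κ̌ y` with `x = (conj(ξ) a + conj(η) b)/|κ|²` and
`y = (η^* a − ξ^* b)/|κ|²`, where `|κ|² = |ξ|² + |η|²`. -/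
theorem spinor_direct_sum_decomposition (n : ℕ) (ξ η : CliffordAlgebra (negQ n))
    (h : IsSpinor (negQ n) ξ η) (a b : CliffordAlgebra (negQ n)) :
    (a = ξ * ((clRe (ξ * cconj ξ) + clRe (η * cconj η))⁻¹ • (cconj ξ * a + cconj η * b)) +
        involute η *
          ((clRe (ξ * cconj ξ) + clRe (η * cconj η))⁻¹ • (reverse η * a - reverse ξ * b)) ∧
      b = η * ((clRe (ξ * cconj ξ) + clRe (η * cconj η))⁻¹ • (cconj ξ * a + cconj η * b)) -
        involute ξ *
          ((clRe (ξ * cconj ξ) + clRe (η * cconj η))⁻¹ • (reverse η * a - reverse ξ * b))) ∧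
    ∀ x' y' : CliffordAlgebra (negQ n),
      a = ξ * x' + involute η * y' → b = η * x' - involute ξ * y' →
      x' = (clRe (ξ * cconj ξ) + clRe (η * cconj η))⁻¹ • (cconj ξ * a + cconj η * b) ∧
      y' = (clRe (ξ * cconj ξ) + clRe (η * cconj η))⁻¹ • (reverse η * a - reverse ξ * b) := by
  have decomposition_iff := spinor_direct_sum_decomposition_general h.1 h.2.1
    (reverse_eq_self_of_mem_paravec h.2.2.2) (h.clNormSq_add_pos (negQ_nonpos n)).ne' a b
  exact ⟨(decomposition_iff _ _).mpr ⟨rfl, rfl⟩,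
    fun x' y' ha hb => (decomposition_iff x' y').mp ⟨ha, hb⟩⟩

end PaperCliff
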